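/- Σᵢ₌₁ⁿ ∫_{−∞}^1 E[min(1, |t| + |x̄ᵢ|)] K̄ᵢ(t) dt ≤ 4 (β₂ + β₃). -/

import Mathlib

open MeasureTheory ProbabilityTheory Real

/-- The standard normal cumulative distribution function. -/
noncomputable def Phi (z : ℝ) : ℝ :=
  (Real.sqrt (2 * Real.pi))⁻¹ * ∫ u in Set.Iic z, Real.exp (-u ^ 2 / 2)

/-- The bounded solution `f_z` of the Stein equation
`f'(w) - w f(w) = 1{w ≤ z} - Φ(z)`. -/
noncomputable def fz (z w : ℝ) : ℝ :=
  if w ≤ z then Real.sqrt (2 * Real.pi) * Real.exp (w ^ 2 / 2) * Phi w * (1 - Phi z)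
  else Real.sqrt (2 * Real.pi) * Real.exp (w ^ 2 / 2) * Phi z * (1 - Phi w)

/-- The derivative `f_z'`, expressed via the Stein equation. -/
noncomputable def fz' (z w : ℝ) : ℝ :=
  w * fz z w + (if w ≤ z then 1 else 0) - Phi z

/-- The truncation `x̄ᵢ = ξᵢ 1{ξᵢ ≤ 1}`. -/
noncomputable def xbar {Ω : Type*} {n : ℕ} (ξ : Fin n → Ω → ℝ) (i : Fin n) (ω : Ω) : ℝ :=
  if ξ i ω ≤ 1 then ξ i ω else 0

/-- `W̄ = ∑ᵢ x̄ᵢ`. -/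
noncomputable def Wbar {Ω : Type*} {n : ℕ} (ξ : Fin n → Ω → ℝ) (ω : Ω) : ℝ :=
  ∑ i, xbar ξ i ω

/-- `W̄⁽ⁱ⁾ = W̄ - x̄ᵢ`. -/
noncomputable def Wbari {Ω : Type*} {n : ℕ} (ξ : Fin n → Ω → ℝ) (i : Fin n) (ω : Ω) : ℝ :=
  Wbar ξ ω - xbar ξ i ω

/-- `K̄ᵢ(t) = E[x̄ᵢ (1{0 ≤ t ≤ x̄ᵢ} - 1{x̄ᵢ ≤ t < 0})]`. -/
noncomputable def Kbar {Ω : Type*} [MeasureSpace Ω] {n : ℕ} (ξ : Fin n → Ω → ℝ)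
    (i : Fin n) (t : ℝ) : ℝ :=
  ∫ ω, xbar ξ i ω * ((if 0 ≤ t ∧ t ≤ xbar ξ i ω then (1 : ℝ) else 0)
    - (if xbar ξ i ω ≤ t ∧ t < 0 then (1 : ℝ) else 0))

/-- `β₂ = ∑ᵢ E[ξᵢ² 1{|ξᵢ| > 1}]`. -/
noncomputable def beta2 {Ω : Type*} [MeasureSpace Ω] {n : ℕ} (ξ : Fin n → Ω → ℝ) : ℝ :=
  ∑ i, ∫ ω, (if 1 < |ξ i ω| then (ξ i ω) ^ 2 else 0)

/-- `β₃ = ∑ᵢ E[|ξᵢ|³ 1{|ξᵢ| ≤ 1}]`. -/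
noncomputable def beta3 {Ω : Type*} [MeasureSpace Ω] {n : ℕ} (ξ : Fin n → Ω → ℝ) : ℝ :=
  ∑ i, ∫ ω, (if |ξ i ω| ≤ 1 then |ξ i ω| ^ 3 else 0)

/-!
Write `X = x̄ᵢ`. The integrand of `K̄ᵢ(t)` is `|X|` for `t` between `0` and `X` and vanishes
elsewhere, so Tonelli's theorem gives `∫ g(|t|) K̄ᵢ(t) dt ≤ E[X² g(|X|)]` for every nondecreasing
`g ≥ 0`. The weight `E[min(1, |t| + |X|)]` is at most `min(1, |t|) + E[min(1, |X|)]`, which leaves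
`E[X² min(1, |X|)] + E[X²] E[min(1, |X|)]`. Both `X²` and `min(1, |X|)` increase with `|X|`, so by
Chebyshev's association inequality the second term is at most the first. Finally
`E[X² min(1, |X|)] ≤ E[ξᵢ² min(1, |ξᵢ|)]`, and these sum to `β₂ + β₃`.
-/

/-- The integrand of Stein's `K`-function: `K̄ᵢ(t)` is the mean of `steinKernel x̄ᵢ t`. It equals
`|x|` for `t` in `[0, x]` or `[x, 0)`, and `0` for other `t`. The `if`s are those of `Kbar`, so that
`Kbar` unfolds to it definitionally. -/
noncomputable def steinKernel (x t : ℝ) : ℝ :=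
  x * ((if 0 ≤ t ∧ t ≤ x then (1 : ℝ) else 0) - (if x ≤ t ∧ t < 0 then (1 : ℝ) else 0))

lemma enorm_steinKernel_le_indicator (x t : ℝ) :
    ‖steinKernel x t‖ₑ ≤ (Set.uIcc 0 x).indicator (fun _ => ‖x‖ₑ) t := by
  by_cases hpos : 0 ≤ t ∧ t ≤ x
  · have hneg : ¬ (x ≤ t ∧ t < 0) := fun h => h.2.not_ge hpos.1
    rw [Set.indicator_of_mem (Set.mem_uIcc_of_le hpos.1 hpos.2), steinKernel, if_pos hpos,
      if_neg hneg, sub_zero, mul_one]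
  · by_cases hneg : x ≤ t ∧ t < 0
    · rw [Set.indicator_of_mem (Set.mem_uIcc_of_ge hneg.1 hneg.2.le), steinKernel, if_neg hpos,
        if_pos hneg, zero_sub, mul_neg_one, enorm_neg]
    · simp [steinKernel, hpos, hneg]

lemma measurable_steinKernel : Measurable fun p : ℝ × ℝ => steinKernel p.1 p.2 := by
  have hpos : MeasurableSet {p : ℝ × ℝ | 0 ≤ p.2 ∧ p.2 ≤ p.1} :=
    (measurableSet_le measurable_const measurable_snd).inter
      (measurableSet_le measurable_snd measurable_fst)
  have hneg : MeasurableSet {p : ℝ × ℝ | p.1 ≤ p.2 ∧ p.2 < 0} :=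
    (measurableSet_le measurable_fst measurable_snd).inter
      (measurableSet_lt measurable_snd measurable_const)
  exact measurable_fst.mul ((measurable_const.ite hpos measurable_const).sub
    (measurable_const.ite hneg measurable_const))

lemma lintegral_mul_enorm_steinKernel_le {g : ℝ → ENNReal} (hg : Monotone g) (x : ℝ) :
    ∫⁻ t, g |t| * ‖steinKernel x t‖ₑ ≤ ‖x‖ₑ ^ 2 * g |x| := by
  have hbound (t : ℝ) : g |t| * ‖steinKernel x t‖ₑ ≤
      (Set.uIcc 0 x).indicator (fun _ => g |x| * ‖x‖ₑ) t := by
    refine (mul_le_mul_right (enorm_steinKernel_le_indicator x t) _).trans ?_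
    by_cases ht : t ∈ Set.uIcc 0 x
    · have habs : |t| ≤ |x| := by simpa using Set.abs_sub_left_of_mem_uIcc ht
      simpa only [Set.indicator_of_mem ht] using mul_le_mul_left (hg habs) _
    · simp [ht]
  calc ∫⁻ t, g |t| * ‖steinKernel x t‖ₑ
      ≤ ∫⁻ t, (Set.uIcc 0 x).indicator (fun _ => g |x| * ‖x‖ₑ) t := lintegral_mono hbound
    _ = g |x| * ‖x‖ₑ * ‖x‖ₑ := by
        rw [lintegral_indicator_const measurableSet_uIcc, Real.volume_interval, sub_zero,
          Real.enorm_eq_ofReal_abs]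
    _ = ‖x‖ₑ ^ 2 * g |x| := by ring

lemma min_add_le_min_add_min {α : Type*} [AddCommMonoid α] [LinearOrder α] [IsOrderedAddMonoid α]
    {a b c : α} (ha : 0 ≤ a) (hb : 0 ≤ b) (hc : 0 ≤ c) :
    min c (a + b) ≤ min c a + min c b := by
  rcases le_total c a with hca | hac
  · rw [min_eq_left hca]
    exact (min_le_left _ _).trans (le_add_of_nonneg_right (le_min hc hb))
  · rcases le_total c b with hcb | hbc
    · rw [min_eq_left hcb]
      exact (min_le_left _ _).trans (le_add_of_nonneg_left (le_min hc ha))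
    · rw [min_eq_right hac, min_eq_right hbc]
      exact min_le_right _ _

lemma ite_sq_add_ite_abs_cube_eq_sq_mul_min (x : ℝ) :
    (if 1 < |x| then x ^ 2 else 0) + (if |x| ≤ 1 then |x| ^ 3 else 0) = x ^ 2 * min 1 |x| := by
  rcases le_or_gt |x| 1 with hx | hx
  · rw [if_neg hx.not_gt, if_pos hx, min_eq_right hx, ← sq_abs x]
    ring
  · rw [if_pos hx, if_neg hx.not_ge, min_eq_left hx.le]
    ring

section RandomVariable

variable {Ω : Type*} {mΩ : MeasurableSpace Ω} {μ : Measure Ω} {X : Ω → ℝ}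

lemma lintegral_mul_enorm_integral_steinKernel_le [SFinite μ] (hX : AEMeasurable X μ)
    {g : ℝ → ENNReal} (hg : Monotone g) :
    ∫⁻ t, g |t| * ‖∫ ω, steinKernel (X ω) t ∂μ‖ₑ ≤ ∫⁻ ω, ‖X ω‖ₑ ^ 2 * g |X ω| ∂μ := by
  have hkernel : AEMeasurable (fun p : ℝ × Ω => steinKernel (X p.2) p.1) (volume.prod μ) :=
    measurable_steinKernel.comp_aemeasurable (hX.comp_snd.prodMk measurable_fst.aemeasurable)
  have hweight : Measurable fun p : ℝ × Ω => g |p.1| := hg.measurable.comp (by fun_prop)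
  calc ∫⁻ t, g |t| * ‖∫ ω, steinKernel (X ω) t ∂μ‖ₑ
      ≤ ∫⁻ t, ∫⁻ ω, g |t| * ‖steinKernel (X ω) t‖ₑ ∂μ := by
        refine lintegral_mono fun t => ?_
        grw [enorm_integral_le_lintegral_enorm]
        exact lintegral_const_mul_le _ _
    _ = ∫⁻ ω, (∫⁻ t, g |t| * ‖steinKernel (X ω) t‖ₑ) ∂μ :=
        lintegral_lintegral_swap (hweight.aemeasurable.mul hkernel.enorm)
    _ ≤ ∫⁻ ω, ‖X ω‖ₑ ^ 2 * g |X ω| ∂μ :=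
        lintegral_mono fun ω => lintegral_mul_enorm_steinKernel_le hg (X ω)

lemma setIntegral_mul_integral_steinKernel_le [SFinite μ] (hX : AEMeasurable X μ)
    {f g : ℝ → ℝ} (hg : Monotone g) (hfg : ∀ t, |f t| ≤ g |t|)
    (hint : Integrable (fun ω => X ω ^ 2 * g |X ω|) μ) (s : Set ℝ) :
    ∫ t in s, f t * ∫ ω, steinKernel (X ω) t ∂μ ≤ ∫ ω, X ω ^ 2 * g |X ω| ∂μ := by
  have hnonneg (ω : Ω) : 0 ≤ X ω ^ 2 * g |X ω| :=
    mul_nonneg (sq_nonneg _) ((abs_nonneg _).trans (hfg _))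
  refine (le_abs_self _).trans ?_
  rw [← ENNReal.ofReal_le_ofReal_iff (integral_nonneg hnonneg), ← Real.enorm_eq_ofReal_abs]
  calc ‖∫ t in s, f t * ∫ ω, steinKernel (X ω) t ∂μ‖ₑ
      ≤ ∫⁻ t, ‖f t * ∫ ω, steinKernel (X ω) t ∂μ‖ₑ :=
        (enorm_integral_le_lintegral_enorm _).trans (setLIntegral_le_lintegral _ _)
    _ ≤ ∫⁻ t, ENNReal.ofReal (g |t|) * ‖∫ ω, steinKernel (X ω) t ∂μ‖ₑ := by
        refine lintegral_mono fun t => ?_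
        rw [enorm_mul, Real.enorm_eq_ofReal_abs (f t)]
        gcongr
        exact hfg t
    _ ≤ ∫⁻ ω, ‖X ω‖ₑ ^ 2 * ENNReal.ofReal (g |X ω|) ∂μ :=
        lintegral_mul_enorm_integral_steinKernel_le hX (ENNReal.ofReal_mono.comp hg)
    _ = ∫⁻ ω, ENNReal.ofReal (X ω ^ 2 * g |X ω|) ∂μ := by
        refine lintegral_congr fun ω => ?_
        rw [ENNReal.ofReal_mul (sq_nonneg _), ← sq_abs, ENNReal.ofReal_pow (abs_nonneg _),
          Real.enorm_eq_ofReal_abs]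
    _ = ENNReal.ofReal (∫ ω, X ω ^ 2 * g |X ω| ∂μ) :=
        (ofReal_integral_eq_lintegral_ofReal hint (ae_of_all _ hnonneg)).symm

-- Integrate `(f x - f y) * (h x - h y) ≥ 0` over the product measure.
lemma integral_mul_integral_le_integral_mul_of_monovary [IsProbabilityMeasure μ] {f h : Ω → ℝ}
    (hfh : Monovary f h) (hf : Integrable f μ) (hh : Integrable h μ)
    (hmul : Integrable (fun ω => f ω * h ω) μ) :
    (∫ ω, f ω ∂μ) * ∫ ω, h ω ∂μ ≤ ∫ ω, f ω * h ω ∂μ := by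
  have hcross : ∫ p : Ω × Ω, (f p.1 * h p.2 + h p.1 * f p.2) ∂μ.prod μ =
      2 * ((∫ ω, f ω ∂μ) * ∫ ω, h ω ∂μ) := by
    rw [integral_add (hf.mul_prod hh) (hh.mul_prod hf), integral_prod_mul, integral_prod_mul]
    ring
  have hdiag : ∫ p : Ω × Ω, (f p.1 * h p.1 + f p.2 * h p.2) ∂μ.prod μ =
      2 * ∫ ω, f ω * h ω ∂μ := by
    rw [integral_add (hmul.comp_fst μ) (hmul.comp_snd μ),
      integral_fun_fst (fun ω => f ω * h ω), integral_fun_snd (fun ω => f ω * h ω)]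
    simp only [probReal_univ, one_smul, two_mul]
  have hle : ∫ p : Ω × Ω, (f p.1 * h p.2 + h p.1 * f p.2) ∂μ.prod μ ≤
      ∫ p : Ω × Ω, (f p.1 * h p.1 + f p.2 * h p.2) ∂μ.prod μ :=
    integral_mono ((hf.mul_prod hh).add (hh.mul_prod hf))
      ((hmul.comp_fst μ).add (hmul.comp_snd μ)) fun p => by
        linarith [monovary_iff_forall_mul_nonneg.1 hfh p.1 p.2]
  linarith

lemma integrable_min_one_abs [IsFiniteMeasure μ] (hX : AEMeasurable X μ) :
    Integrable (fun ω => min 1 |X ω|) μ :=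
  .of_mem_Icc 0 1 (by fun_prop) (ae_of_all _ fun _ => ⟨by positivity, min_le_left _ _⟩)

lemma integrable_sq_mul_min_one_abs (hX : MemLp X 2 μ) :
    Integrable (fun ω => X ω ^ 2 * min 1 |X ω|) μ := by
  have hmeas := hX.aestronglyMeasurable.aemeasurable
  refine hX.integrable_sq.mul_bdd (c := 1) (by fun_prop) (ae_of_all _ fun ω => ?_)
  rw [Real.norm_of_nonneg (by positivity)]
  exact min_le_left _ _

lemma integral_min_one_add_abs_le [IsProbabilityMeasure μ] (hX : AEMeasurable X μ) {s : ℝ}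
    (hs : 0 ≤ s) :
    ∫ ω, min 1 (s + |X ω|) ∂μ ≤ min 1 s + ∫ ω, min 1 |X ω| ∂μ := by
  have hint := integrable_min_one_abs hX
  calc ∫ ω, min 1 (s + |X ω|) ∂μ ≤ ∫ ω, (min 1 s + min 1 |X ω|) ∂μ :=
        integral_mono_of_nonneg (ae_of_all _ fun ω => by positivity)
          ((integrable_const _).add hint)
          (ae_of_all _ fun ω => min_add_le_min_add_min hs (abs_nonneg _) zero_le_one)
    _ = min 1 s + ∫ ω, min 1 |X ω| ∂μ := by
        rw [integral_add (integrable_const _) hint, integral_const, probReal_univ, one_smul]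

lemma integral_sq_mul_integral_min_one_abs_le [IsProbabilityMeasure μ] (hX : MemLp X 2 μ) :
    (∫ ω, X ω ^ 2 ∂μ) * ∫ ω, min 1 |X ω| ∂μ ≤ ∫ ω, X ω ^ 2 * min 1 |X ω| ∂μ := by
  have hmono : Monovary (fun ω => X ω ^ 2) fun ω => min 1 |X ω| := fun ω ω' hlt =>
    sq_le_sq.2 (le_of_not_ge fun hge => hlt.not_ge (min_le_min_left 1 hge))
  exact integral_mul_integral_le_integral_mul_of_monovary hmono hX.integrable_sq
    (integrable_min_one_abs hX.aestronglyMeasurable.aemeasurable)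
    (integrable_sq_mul_min_one_abs hX)

lemma setIntegral_min_one_mul_integral_steinKernel_le [IsProbabilityMeasure μ]
    (hX : MemLp X 2 μ) (s : Set ℝ) :
    ∫ t in s, (∫ ω, min 1 (|t| + |X ω|) ∂μ) * ∫ ω, steinKernel (X ω) t ∂μ ≤
      2 * ∫ ω, X ω ^ 2 * min 1 |X ω| ∂μ := by
  have hmeas := hX.aestronglyMeasurable.aemeasurable
  have hint := integrable_sq_mul_min_one_abs hX
  set c := ∫ ω, min 1 |X ω| ∂μ
  have hmono : Monotone fun u : ℝ => min 1 u + c := fun u v huv =>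
    add_le_add_left (min_le_min_left 1 huv) c
  have hweight (t : ℝ) : |∫ ω, min 1 (|t| + |X ω|) ∂μ| ≤ min 1 |t| + c := by
    rw [abs_of_nonneg (integral_nonneg fun ω => by positivity)]
    exact integral_min_one_add_abs_le hmeas (abs_nonneg t)
  have hexpand : (fun ω => X ω ^ 2 * (min 1 |X ω| + c)) =
      fun ω => X ω ^ 2 * min 1 |X ω| + X ω ^ 2 * c := by
    simp only [mul_add]
  calc ∫ t in s, (∫ ω, min 1 (|t| + |X ω|) ∂μ) * ∫ ω, steinKernel (X ω) t ∂μ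
      ≤ ∫ ω, X ω ^ 2 * (min 1 |X ω| + c) ∂μ :=
        setIntegral_mul_integral_steinKernel_le hmeas hmono hweight
          (hexpand ▸ hint.add (hX.integrable_sq.mul_const c)) s
    _ = ∫ ω, X ω ^ 2 * min 1 |X ω| ∂μ + (∫ ω, X ω ^ 2 ∂μ) * c := by
        rw [hexpand, integral_add hint (hX.integrable_sq.mul_const c), integral_mul_const]
    _ ≤ 2 * ∫ ω, X ω ^ 2 * min 1 |X ω| ∂μ := by
        linarith [integral_sq_mul_integral_min_one_abs_le hX]

lemma integral_sq_mul_min_one_abs_mono {Y : Ω → ℝ} (hY : MemLp Y 2 μ) (hXY : ∀ ω, |X ω| ≤ |Y ω|) :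
    ∫ ω, X ω ^ 2 * min 1 |X ω| ∂μ ≤ ∫ ω, Y ω ^ 2 * min 1 |Y ω| ∂μ :=
  integral_mono_of_nonneg (ae_of_all _ fun ω => by positivity) (integrable_sq_mul_min_one_abs hY)
    (ae_of_all _ fun ω => mul_le_mul (sq_le_sq.2 (hXY ω)) (min_le_min_left 1 (hXY ω))
      (by positivity) (by positivity))

lemma integral_ite_sq_add_integral_ite_abs_cube_eq (hX : MemLp X 2 μ) :
    (∫ ω, if 1 < |X ω| then X ω ^ 2 else 0 ∂μ) + (∫ ω, if |X ω| ≤ 1 then |X ω| ^ 3 else 0 ∂μ) =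
      ∫ ω, X ω ^ 2 * min 1 |X ω| ∂μ := by
  have hmeas := hX.aestronglyMeasurable.aemeasurable
  have hmeas_gt : Measurable fun x : ℝ => if 1 < |x| then x ^ 2 else 0 :=
    (by fun_prop : Measurable fun x : ℝ => x ^ 2).ite
      (measurableSet_lt measurable_const measurable_norm) measurable_const
  have hmeas_le : Measurable fun x : ℝ => if |x| ≤ 1 then |x| ^ 3 else 0 :=
    (by fun_prop : Measurable fun x : ℝ => |x| ^ 3).ite
      (measurableSet_le measurable_norm measurable_const) measurable_const
  have hint := integrable_sq_mul_min_one_abs hX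
  rw [← integral_add]
  · exact integral_congr_ae (ae_of_all _ fun ω => ite_sq_add_ite_abs_cube_eq_sq_mul_min (X ω))
  · refine hint.mono' (hmeas_gt.comp_aemeasurable hmeas).aestronglyMeasurable
      (ae_of_all _ fun ω => ?_)
    rw [Real.norm_of_nonneg (by positivity), ← ite_sq_add_ite_abs_cube_eq_sq_mul_min]
    exact le_add_of_nonneg_right (by positivity)
  · refine hint.mono' (hmeas_le.comp_aemeasurable hmeas).aestronglyMeasurable
      (ae_of_all _ fun ω => ?_)
    rw [Real.norm_of_nonneg (by positivity), ← ite_sq_add_ite_abs_cube_eq_sq_mul_min]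
    exact le_add_of_nonneg_left (by positivity)

end RandomVariable

section Truncation

variable {Ω : Type*} {n : ℕ} {ξ : Fin n → Ω → ℝ}

lemma abs_xbar_le (ξ : Fin n → Ω → ℝ) (i : Fin n) (ω : Ω) : |xbar ξ i ω| ≤ |ξ i ω| := by
  unfold xbar
  split_ifs <;> simp

lemma memLp_xbar {mΩ : MeasurableSpace Ω} {μ : Measure Ω} {p : ENNReal} {i : Fin n}
    (hξ : MemLp (ξ i) p μ) : MemLp (xbar ξ i) p μ := by
  have htrunc : Measurable fun x : ℝ => if x ≤ 1 then x else 0 :=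
    measurable_id.ite measurableSet_Iic measurable_const
  exact hξ.mono (htrunc.comp_aemeasurable hξ.aestronglyMeasurable.aemeasurable).aestronglyMeasurable
    (ae_of_all _ (abs_xbar_le ξ i))

variable [MeasureSpace Ω]

lemma beta2_add_beta3_eq (hξ : ∀ i, MemLp (ξ i) 2 ℙ) :
    beta2 ξ + beta3 ξ = ∑ i, ∫ ω, ξ i ω ^ 2 * min 1 |ξ i ω| := by
  rw [beta2, beta3, ← Finset.sum_add_distrib]
  exact Finset.sum_congr rfl fun i _ => integral_ite_sq_add_integral_ite_abs_cube_eq (hξ i)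

lemma beta2_nonneg (ξ : Fin n → Ω → ℝ) : 0 ≤ beta2 ξ :=
  Finset.sum_nonneg fun i _ => integral_nonneg fun ω => by positivity

lemma beta3_nonneg (ξ : Fin n → Ω → ℝ) : 0 ≤ beta3 ξ :=
  Finset.sum_nonneg fun i _ => integral_nonneg fun ω => by positivity

end Truncation

theorem min_kbar_integral_bound_general
    {Ω : Type*} [MeasureSpace Ω] [IsProbabilityMeasure (ℙ : Measure Ω)]
    {n : ℕ} (ξ : Fin n → Ω → ℝ) (hL2 : ∀ i, MemLp (ξ i) 2 ℙ) :
    (∑ i, ∫ t in Set.Iic (1 : ℝ), (∫ ω, min 1 (|t| + |xbar ξ i ω|)) * Kbar ξ i t)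
      ≤ 2 * (beta2 ξ + beta3 ξ) := by
  rw [beta2_add_beta3_eq hL2, Finset.mul_sum]
  refine Finset.sum_le_sum fun i _ => ?_
  calc ∫ t in Set.Iic (1 : ℝ), (∫ ω, min 1 (|t| + |xbar ξ i ω|)) * Kbar ξ i t
      ≤ 2 * ∫ ω, xbar ξ i ω ^ 2 * min 1 |xbar ξ i ω| :=
        setIntegral_min_one_mul_integral_steinKernel_le (memLp_xbar (hL2 i)) _
    _ ≤ 2 * ∫ ω, ξ i ω ^ 2 * min 1 |ξ i ω| := by
        gcongr 2 * ?_
        exact integral_sq_mul_min_one_abs_mono (hL2 i) (abs_xbar_le ξ i)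

/-- Bound (4.23). -/
theorem min_kbar_integral_bound
    {Ω : Type*} [MeasureSpace Ω] [IsProbabilityMeasure (ℙ : Measure Ω)]
    {n : ℕ} (ξ : Fin n → Ω → ℝ)
    (hmeas : ∀ i, Measurable (ξ i))
    (hindep : iIndepFun ξ ℙ)
    (hL2 : ∀ i, MemLp (ξ i) 2 ℙ)
    (hmean : ∀ i, ∫ ω, ξ i ω = 0)
    (hvar : ∑ i, ∫ ω, (ξ i ω) ^ 2 = 1) :
    (∑ i, ∫ t in Set.Iic (1 : ℝ), (∫ ω, min 1 (|t| + |xbar ξ i ω|)) * Kbar ξ i t)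
      ≤ 4 * (beta2 ξ + beta3 ξ) := by
  linarith [min_kbar_integral_bound_general ξ hL2, beta2_nonneg ξ, beta3_nonneg ξ]
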